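/- Let p ≥ 1, let ξ_0, …, ξ_{p−1} be the (distinct, strictly positive) roots of the classical Laguerre polynomial L_p, let Λ = diag(ξ_0, …, ξ_{p−1}), and let Q be the p×p matrix with entries Q_{ij} = (−1)^i · √(ξ_j) · L_i(ξ_j) / (p · |L_{p−1}(ξ_j)|) for 0 ≤ i, j ≤ p−1. Then T_p = Q·Λ·Qᵀ; in particular, the eigenvalues of T_p are exactly the roots of L_p. -/

import Mathlib

/-!
By the three-term recurrence of the Laguerre polynomials, for every root `x` of `L_p` the vector
`u(x) = ((-1)^i L_i(x))_{i < p}` satisfies `T_p u(x) = x u(x)`: the term with `L_p(x)` that is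
missing from the last row vanishes. Since `T_p` is symmetric, the vectors `u(ξ_j)` for distinct
`ξ_j` are orthogonal. Their lengths come from the confluent Christoffel–Darboux formula in the
derivative-free form
`x ∑_{i<n} L_i(x)² = n² L_n(x)² - n (2n - x) L_n(x) L_{n-1}(x) + n² L_{n-1}(x)²`,
which at a root of `L_p` reads `ξ ∑_{i<p} L_i(ξ)² = p² L_{p-1}(ξ)²`. As `L_0 = 1`, the left side is
positive, so `L_{p-1}(ξ) ≠ 0`, and the columns of `Q` are orthonormal eigenvectors of `T_p`. Hence
`Qᵀ Q = 1`, `T_p Q = Q Λ` and `T_p = Q Λ Qᵀ`. The spectrum of `T_p` is then `{ξ_j}`; conversely,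
every root `x` of `L_p` lies in it because `u(x)` has first entry `1`, so no degree count is needed.
-/

open Polynomial Matrix

/-- The classical Laguerre polynomial `L_p(x) = ∑_{k=0}^p (-1)^k (p choose k) x^k / k!`. -/
noncomputable def laguerre (p : ℕ) : Polynomial ℝ :=
  ∑ k ∈ Finset.range (p + 1),
    Polynomial.C ((-1 : ℝ) ^ k * (p.choose k : ℝ) / (Nat.factorial k : ℝ)) * Polynomial.X ^ k

/-- The `p × p` symmetric tridiagonal Jacobi matrix of the Laguerre three-term recurrence:
diagonal entries `2i + 1`, off-diagonal entries `T_p(i, i+1) = T_p(i+1, i) = i + 1`. -/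
def laguerreJacobi (p : ℕ) : Matrix (Fin p) (Fin p) ℝ :=
  Matrix.of fun i j =>
    if (i : ℕ) = (j : ℕ) then 2 * (i : ℕ) + 1
    else if (i : ℕ) + 1 = (j : ℕ) then (i : ℕ) + 1
    else if (j : ℕ) + 1 = (i : ℕ) then (j : ℕ) + 1
    else 0

/-- The matrix `Q` with entries `Q_{ij} = (-1)^i √(ξ_j) L_i(ξ_j) / (p |L_{p-1}(ξ_j)|)`, built
from the roots `ξ_0, …, ξ_{p-1}` of `L_p`. -/
noncomputable def laguerreQ (p : ℕ) (ξ : Fin p → ℝ) : Matrix (Fin p) (Fin p) ℝ :=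
  Matrix.of fun i j =>
    (-1 : ℝ) ^ (i : ℕ) * Real.sqrt (ξ j) * (laguerre (i : ℕ)).eval (ξ j) /
      ((p : ℝ) * |(laguerre (p - 1)).eval (ξ j)|)

lemma laguerre_coeff (n k : ℕ) :
    (laguerre n).coeff k = (-1 : ℝ) ^ k * (n.choose k : ℝ) / (Nat.factorial k : ℝ) := by
  simp only [laguerre, finsetSum_coeff, coeff_C_mul, coeff_X_pow, mul_ite, mul_one, mul_zero,
    Finset.sum_ite_eq, Finset.mem_range]
  split_ifs with h
  · rfl
  · rw [Nat.choose_eq_zero_of_lt (by omega)]; simp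

lemma laguerre_zero : laguerre 0 = 1 := by simp [laguerre]

lemma laguerre_one : laguerre 1 = 1 - X := by
  simp [laguerre, Finset.sum_range_succ, sub_eq_add_neg]

lemma laguerre_rec_aux (n : ℕ) :
    C ((n : ℝ) + 2) * laguerre (n + 2) + C ((n : ℝ) + 1) * laguerre n
      = C (2 * (n : ℝ) + 3) * laguerre (n + 1) - laguerre (n + 1) * X := by
  ext k
  simp only [coeff_add, coeff_sub, coeff_C_mul]
  cases k with
  | zero => simp [laguerre_coeff]; ring
  | succ j =>
    simp only [coeff_mul_X, laguerre_coeff]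
    have habs : ((n : ℝ) + 1 - j) * ((n + 1).choose j : ℝ) = (n + 1) * (n.choose j : ℝ) := by
      have h := Nat.choose_mul_succ_eq n j
      rcases le_or_gt j (n + 1) with hj | hj
      · have h' : ((n.choose j : ℝ)) * (n + 1) = ((n + 1).choose j : ℝ) * ((n + 1 - j : ℕ) : ℝ) := by
          exact_mod_cast h
        rw [Nat.cast_sub hj] at h'
        push_cast at h'
        linarith
      · rw [Nat.choose_eq_zero_of_lt hj, Nat.choose_eq_zero_of_lt (show n < j by omega)]
        simp
    have h1 : ((n + 2).choose (j + 1) : ℝ) = (n + 1).choose j + (n + 1).choose (j + 1) := by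
      exact_mod_cast Nat.choose_succ_succ (n + 1) j
    have h2 : ((n + 1).choose (j + 1) : ℝ) = n.choose j + n.choose (j + 1) := by
      exact_mod_cast Nat.choose_succ_succ n j
    have hf : (Nat.factorial j : ℝ) ≠ 0 := by positivity
    rw [h1, h2, Nat.factorial_succ]
    push_cast
    field_simp
    linear_combination (-(-1 : ℝ) ^ j) * habs

/-- The three-term recurrence. For `n = 0` the junk value `0 - 1 = 0` is harmless because of the
factor `n`. -/
lemma laguerre_rec (n : ℕ) (x : ℝ) :
    ((n : ℝ) + 1) * (laguerre (n + 1)).eval x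
      = (2 * (n : ℝ) + 1 - x) * (laguerre n).eval x - n * (laguerre (n - 1)).eval x := by
  cases n with
  | zero => simp [laguerre_zero, laguerre_one]
  | succ m =>
    have h := congrArg (eval x) (laguerre_rec_aux m)
    simp only [eval_add, eval_sub, eval_mul, eval_C, eval_X] at h
    push_cast
    linear_combination h

/-- The confluent Christoffel–Darboux formula, with the derivatives eliminated by means of
`x L_n' = n (L_n - L_{n-1})`. -/
lemma laguerre_sum_sq (n : ℕ) (x : ℝ) :
    x * ∑ i ∈ Finset.range n, (laguerre i).eval x ^ 2
      = n ^ 2 * (laguerre n).eval x ^ 2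
        - n * (2 * n - x) * (laguerre n).eval x * (laguerre (n - 1)).eval x
        + n ^ 2 * (laguerre (n - 1)).eval x ^ 2 := by
  induction n with
  | zero => simp
  | succ n ih =>
    rw [Finset.sum_range_succ, mul_add, ih]
    have h := laguerre_rec n x
    have h' : (n : ℝ) * (laguerre (n - 1)).eval x
        = (2 * n + 1 - x) * (laguerre n).eval x - (n + 1) * (laguerre (n + 1)).eval x := by
      linarith
    simp only [Nat.add_sub_cancel]
    push_cast
    generalize (laguerre n).eval x = a at *
    generalize (laguerre (n + 1)).eval x = b at *
    generalize (laguerre (n - 1)).eval x = c at *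
    linear_combination
      (-(2 * n - x) * a + n * c + ((2 * n + 1 - x) * a - (n + 1) * b)) * h'

lemma laguerre_norm (p : ℕ) (x : ℝ) (hx : (laguerre p).eval x = 0) :
    x * ∑ i : Fin p, (laguerre i).eval x ^ 2 = (p * (laguerre (p - 1)).eval x) ^ 2 := by
  rw [Fin.sum_univ_eq_sum_range (fun i => (laguerre i).eval x ^ 2) p, laguerre_sum_sq, hx]
  ring

lemma laguerre_pred_ne_zero (p : ℕ) (hp : 1 ≤ p) (x : ℝ) (h0 : 0 < x)
    (hx : (laguerre p).eval x = 0) : (laguerre (p - 1)).eval x ≠ 0 := by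
  intro h
  have hn := laguerre_norm p x hx
  have hle : (laguerre ((⟨0, hp⟩ : Fin p) : ℕ)).eval x ^ 2
      ≤ ∑ i : Fin p, (laguerre i).eval x ^ 2 :=
    Finset.single_le_sum (f := fun i : Fin p => (laguerre i).eval x ^ 2)
      (fun i _ => sq_nonneg _) (Finset.mem_univ _)
  simp only [laguerre_zero, eval_one, one_pow] at hle
  rw [h] at hn
  nlinarith

/-- The vector `((-1)^i L_i(x))_{i < p}`, an eigenvector of the Jacobi matrix when `L_p(x) = 0`. -/
noncomputable def laguerreVec (p : ℕ) (x : ℝ) : Fin p → ℝ :=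
  fun i => (-1) ^ (i : ℕ) * (laguerre i).eval x

lemma laguerreJacobi_transpose (p : ℕ) : (laguerreJacobi p)ᵀ = laguerreJacobi p := by
  ext i j
  simp only [laguerreJacobi, transpose_apply, of_apply]
  split_ifs <;> first | omega | simp_all

lemma laguerreJacobi_mulVec (p : ℕ) (x : ℝ) (hx : (laguerre p).eval x = 0) :
    laguerreJacobi p *ᵥ laguerreVec p x = x • laguerreVec p x := by
  ext i
  obtain ⟨i, hi⟩ := i
  set u : ℕ → ℝ := fun k => (-1) ^ k * (laguerre k).eval x with hu
  -- For `i = 0` the truncated index `i - 1` is `0`, but its coefficient `i` is zero.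
  have hsplit : ∀ j : ℕ, (if i = j then 2 * (i : ℝ) + 1
      else if i + 1 = j then (i : ℝ) + 1 else if j + 1 = i then (j : ℝ) + 1 else 0) * u j
      = (if i = j then (2 * (i : ℝ) + 1) * u j else 0)
        + (if i + 1 = j then ((i : ℝ) + 1) * u j else 0)
        + (if i - 1 = j then (i : ℝ) * u j else 0) := by
    intro j
    have hcast : j + 1 = i → (j : ℝ) + 1 = i := fun h => by exact_mod_cast h
    by_cases h1 : i = j
    · subst h1
      rcases i with _ | i <;> simp
    · by_cases h2 : j + 1 = i
      · simp [h1, h2, hcast h2, show i + 1 ≠ j by omega, show i - 1 = j by omega]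
      · by_cases h3 : i + 1 = j
        · simp [h1, h3, show i - 1 ≠ j by omega]
        · simp [h1, h2, h3, show i - 1 ≠ j by omega]
  have hsum : (laguerreJacobi p *ᵥ laguerreVec p x) ⟨i, hi⟩
      = ∑ j ∈ Finset.range p, (if i = j then 2 * (i : ℝ) + 1
      else if i + 1 = j then (i : ℝ) + 1 else if j + 1 = i then (j : ℝ) + 1 else 0) * u j := by
    rw [← Fin.sum_univ_eq_sum_range]
    rfl
  -- For `i = p - 1` the entry `u p` lies outside the matrix, but it vanishes.
  have hlast : (if i + 1 ∈ Finset.range p then ((i : ℝ) + 1) * u (i + 1) else 0)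
      = ((i : ℝ) + 1) * u (i + 1) := by
    split_ifs with h
    · rfl
    · have : i + 1 = p := by simp at h; omega
      simp [hu, this, hx]
  rw [hsum, Finset.sum_congr rfl (fun j _ => hsplit j),
    Finset.sum_add_distrib, Finset.sum_add_distrib]
  simp only [Finset.sum_ite_eq]
  rw [hlast, if_pos (Finset.mem_range.2 hi), if_pos (Finset.mem_range.2 (by omega : i - 1 < p))]
  have h := laguerre_rec i x
  simp only [Pi.smul_apply, smul_eq_mul, laguerreVec]
  rcases i with _ | i
  · simp [hu] at h ⊢
    linarith
  · simp only [hu, Nat.add_sub_cancel, pow_succ] at h ⊢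
    push_cast at h ⊢
    linear_combination (-1 : ℝ) ^ i * h

/-- Eigenvectors of a symmetric matrix for distinct eigenvalues are orthogonal. -/
lemma laguerreVec_orthogonal (p : ℕ) {x y : ℝ} (hxy : x ≠ y) (hx : (laguerre p).eval x = 0)
    (hy : (laguerre p).eval y = 0) : laguerreVec p x ⬝ᵥ laguerreVec p y = 0 := by
  have h : x * (laguerreVec p x ⬝ᵥ laguerreVec p y) = y * (laguerreVec p x ⬝ᵥ laguerreVec p y) := by
    rw [← smul_eq_mul, ← smul_dotProduct, ← laguerreJacobi_mulVec p x hx, ← smul_eq_mul,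
      ← dotProduct_smul, ← laguerreJacobi_mulVec p y hy, dotProduct_mulVec, ← mulVec_transpose,
      laguerreJacobi_transpose]
  have h' : (x - y) * (laguerreVec p x ⬝ᵥ laguerreVec p y) = 0 := by linarith
  exact (mul_eq_zero.1 h').resolve_left (sub_ne_zero.2 hxy)

lemma laguerreQ_apply (p : ℕ) (ξ : Fin p → ℝ) (i j : Fin p) :
    laguerreQ p ξ i j
      = Real.sqrt (ξ j) / (p * |(laguerre (p - 1)).eval (ξ j)|) * laguerreVec p (ξ j) i := by
  simp only [laguerreQ, laguerreVec, of_apply]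
  ring

lemma laguerreQ_transpose_mul (p : ℕ) (hp : 1 ≤ p) (ξ : Fin p → ℝ)
    (hinj : Function.Injective ξ) (hpos : ∀ j, 0 < ξ j)
    (hroot : ∀ j, (laguerre p).eval (ξ j) = 0) :
    (laguerreQ p ξ)ᵀ * laguerreQ p ξ = 1 := by
  ext j k
  have hdot : ((laguerreQ p ξ)ᵀ * laguerreQ p ξ) j k
      = Real.sqrt (ξ j) / (p * |(laguerre (p - 1)).eval (ξ j)|)
        * (Real.sqrt (ξ k) / (p * |(laguerre (p - 1)).eval (ξ k)|))
        * (laguerreVec p (ξ j) ⬝ᵥ laguerreVec p (ξ k)) := by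
    simp only [mul_apply, transpose_apply, laguerreQ_apply, dotProduct, Finset.mul_sum]
    exact Finset.sum_congr rfl fun i _ => by ring
  rw [hdot]
  rcases eq_or_ne j k with rfl | hjk
  · have hn := laguerre_norm p (ξ j) (hroot j)
    have hne := laguerre_pred_ne_zero p hp (ξ j) (hpos j) (hroot j)
    have hp0 : (p : ℝ) ≠ 0 := by exact_mod_cast (by omega : p ≠ 0)
    have hself : laguerreVec p (ξ j) ⬝ᵥ laguerreVec p (ξ j)
        = ∑ i : Fin p, (laguerre i).eval (ξ j) ^ 2 := by
      refine Finset.sum_congr rfl fun i _ => ?_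
      have h1 : ((-1 : ℝ) ^ (i : ℕ)) ^ 2 = 1 := by rw [← pow_mul', pow_mul]; simp
      simp only [laguerreVec]
      linear_combination (laguerre i).eval (ξ j) ^ 2 * h1
    rw [one_apply_eq, hself, div_mul_div_comm, Real.mul_self_sqrt (hpos j).le, div_mul_eq_mul_div,
      hn, mul_mul_mul_comm, abs_mul_abs_self]
    field_simp
  · rw [laguerreVec_orthogonal p (hinj.ne hjk) (hroot j) (hroot k), mul_zero, one_apply_ne hjk]

lemma laguerreJacobi_mul_Q (p : ℕ) (ξ : Fin p → ℝ)
    (hroot : ∀ j, (laguerre p).eval (ξ j) = 0) :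
    laguerreJacobi p * laguerreQ p ξ = laguerreQ p ξ * diagonal ξ := by
  ext i j
  have h := congrFun (laguerreJacobi_mulVec p (ξ j) (hroot j)) i
  simp only [mulVec, dotProduct, Pi.smul_apply, smul_eq_mul] at h
  rw [mul_diagonal, mul_apply, laguerreQ_apply, mul_assoc, mul_comm (laguerreVec p (ξ j) i), ← h,
    Finset.mul_sum]
  exact Finset.sum_congr rfl fun k _ => by rw [laguerreQ_apply]; ring

/-- If `ξ_0, …, ξ_{p-1}` are the distinct, strictly positive roots of `L_p`,
`Λ = diag(ξ_0, …, ξ_{p-1})` and `Q` is as above, then `T_p = Q Λ Qᵀ`; in particular the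
eigenvalues of `T_p` are exactly the roots of `L_p`. -/
theorem laguerreJacobi_eq_QLambdaQt (p : ℕ) (hp : 1 ≤ p) (ξ : Fin p → ℝ)
    (hinj : Function.Injective ξ)
    (hpos : ∀ j, 0 < ξ j)
    (hroot : ∀ j, (laguerre p).eval (ξ j) = 0) :
    laguerreJacobi p = laguerreQ p ξ * Matrix.diagonal ξ * (laguerreQ p ξ)ᵀ ∧
      spectrum ℝ (laguerreJacobi p) = {x : ℝ | (laguerre p).eval x = 0} := by
  have hQ := laguerreQ_transpose_mul p hp ξ hinj hpos hroot
  have hQ' : laguerreQ p ξ * (laguerreQ p ξ)ᵀ = 1 := mul_eq_one_comm.1 hQ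
  have hT : laguerreJacobi p = laguerreQ p ξ * Matrix.diagonal ξ * (laguerreQ p ξ)ᵀ := by
    rw [← laguerreJacobi_mul_Q p ξ hroot, Matrix.mul_assoc, hQ', Matrix.mul_one]
  refine ⟨hT, Set.Subset.antisymm ?_ ?_⟩
  · let U : (Matrix (Fin p) (Fin p) ℝ)ˣ := ⟨laguerreQ p ξ, (laguerreQ p ξ)ᵀ, hQ', hQ⟩
    have hspec : spectrum ℝ (laguerreJacobi p) = spectrum ℝ (Matrix.diagonal ξ) := by
      rw [hT]
      exact spectrum.units_conjugate (R := ℝ) (a := Matrix.diagonal ξ) (u := U)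
    rw [hspec, spectrum_diagonal]
    rintro _ ⟨j, rfl⟩
    exact hroot j
  · intro x hx
    rw [← spectrum_toLin']
    refine Module.End.HasEigenvalue.mem_spectrum
      (Module.End.hasEigenvalue_of_hasEigenvector (x := laguerreVec p x) ⟨?_, ?_⟩)
    · rw [Module.End.mem_eigenspace_iff, toLin'_apply]
      exact laguerreJacobi_mulVec p x hx
    · intro h0
      have := congrFun h0 ⟨0, hp⟩
      simp [laguerreVec, laguerre_zero] at this
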